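/- arXiv:1001.1959 — 2 statements merged into one kernel-verified Lean document; each statement's English description precedes it below -/
import Mathlib

section
/- Let (P_t)_{t≥0} be an increasing family of orthogonal projections on H and let f : [0,∞) → B(H) be hermitian, increasing, and adapted-commuting with respect to (P_t). Then for any partitions θ', θ'' of [a,b] ⊆ [0,∞) with θ'' refining θ', one has σ_{θ'} ≤ σ_{θ''} (i.e. σ_{θ''} − σ_{θ'} is a positive operator); thus the net (σ_θ), indexed by the partitions of [a,b] directed by refinement, is increasing. -/
/-- `sigmaSum f P θ` is the operator sum σ_θ = Σ_{k=1}^m f(t_{k−1})(P_{t_k} − P_{t_{k−1}})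
where t₀ < t₁ < ⋯ < tₘ is the increasing enumeration of the finite set θ. -/
noncomputable def sigmaSum {H : Type*} [NormedAddCommGroup H] [InnerProductSpace ℂ H]
    (f P : ℝ → H →L[ℂ] H) (θ : Finset ℝ) : H →L[ℂ] H :=
  (((θ.sort (· ≤ ·)).zip (θ.sort (· ≤ ·)).tail).map
    (fun p => f p.1 ∘L (P p.2 - P p.1))).sum

/-- `IsPartitionOf a b θ`: θ is a partition a = t₀ < t₁ < ⋯ < tₘ = b of [a,b]. -/
def IsPartitionOf (a b : ℝ) (θ : Finset ℝ) : Prop :=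
  a ∈ θ ∧ b ∈ θ ∧ ∀ x ∈ θ, x ∈ Set.Icc a b

/-!
For `s ≤ u ≤ t`, splitting the interval `[s, t]` at `u` replaces `f s * (P t - P s)` by
`f s * (P u - P s) + f u * (P t - P u)`, which adds `(f u - f s) * (P t - P u)`. This is a product
of commuting positive operators, hence positive. So `w s t = f s * (P t - P s)` satisfies the
triangle inequality `w s t ≤ w s u + w u t`, and inserting points between the endpoints of a
partition can only increase the sum of `w` over its consecutive pairs, as for the length of a
polygonal path.
-/

section ConsecutiveSum

variable {ι M : Type*}

/-- The sum `w x₀ x₁ + w x₁ x₂ + ⋯ + w xₙ₋₁ xₙ` of a function of two variables over the consecutive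
pairs of a list `[x₀, …, xₙ]`. With `w s t = f s * (P t - P s)` it is the left Riemann–Stieltjes sum
of `f` against `P`; the lists are not assumed sorted. -/
def consecutiveSum [AddMonoid M] (w : ι → ι → M) (l : List ι) : M :=
  ((l.zip l.tail).map fun p ↦ w p.1 p.2).sum

theorem consecutiveSum_cons_cons [AddMonoid M] (w : ι → ι → M) (x y : ι) (l : List ι) :
    consecutiveSum w (x :: y :: l) = w x y + consecutiveSum w (y :: l) := by
  simp [consecutiveSum]

variable [AddMonoid M] [Preorder M] [AddRightMono M] {w : ι → ι → M}

theorem consecutiveSum_cons_le_cons_cons {x y : ι} {l : List ι} (hl : l ≠ [])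
    (hw : ∀ z ∈ l, w x z ≤ w x y + w y z) :
    consecutiveSum w (x :: l) ≤ consecutiveSum w (x :: y :: l) := by
  obtain ⟨z, l, rfl⟩ := List.exists_cons_of_ne_nil hl
  simp only [consecutiveSum_cons_cons, ← add_assoc]
  gcongr
  exact hw z List.mem_cons_self

theorem consecutiveSum_le_of_sublist [AddLeftMono M] {a b : ι} {l₁ l₂ : List ι}
    (hl : l₁.Sublist l₂)
    (hw : (a :: (l₂ ++ [b])).Triplewise fun x y z ↦ w x z ≤ w x y + w y z) :
    consecutiveSum w (a :: (l₁ ++ [b])) ≤ consecutiveSum w (a :: (l₂ ++ [b])) := by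
  induction hl generalizing a with
  | slnil => rfl
  | @cons l₁ l₂ y hsub ih =>
    obtain ⟨hwa, hwy⟩ := List.triplewise_cons.1 hw
    have hskip : ∀ z ∈ l₁ ++ [b], w a z ≤ w a y + w y z := fun z hz ↦
      List.rel_of_pairwise_cons hwa ((hsub.append_right [b]).mem hz)
    calc consecutiveSum w (a :: (l₁ ++ [b]))
        ≤ consecutiveSum w (a :: y :: (l₁ ++ [b])) :=
          consecutiveSum_cons_le_cons_cons (by simp) hskip
      _ = w a y + consecutiveSum w (y :: (l₁ ++ [b])) := consecutiveSum_cons_cons ..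
      _ ≤ w a y + consecutiveSum w (y :: (l₂ ++ [b])) := by gcongr; exact ih hwy
      _ = consecutiveSum w (a :: (y :: l₂ ++ [b])) := (consecutiveSum_cons_cons ..).symm
  | cons_cons y _ ih =>
    simp only [List.cons_append, consecutiveSum_cons_cons]
    gcongr
    exact ih (List.triplewise_cons.1 hw).2

end ConsecutiveSum

theorem triplewise_of_pairwise {α : Type*} {r : α → α → Prop} {p : α → α → α → Prop} {l : List α}
    (hl : l.Pairwise r) (hp : ∀ x ∈ l, ∀ y ∈ l, ∀ z ∈ l, r x y → r y z → p x y z) :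
    l.Triplewise p := by
  rw [List.pairwise_iff_getElem] at hl
  rw [List.triplewise_iff_getElem]
  intro i j k hij hjk hk
  exact hp _ (by simp) _ (by simp) _ (by simp) (hl _ _ _ _ hij) (hl _ _ _ _ hjk)

section SortedFinset

variable {ι : Type*} [LinearOrder ι]

theorem sort_sublist_sort {s t : Finset ι} (h : s ⊆ t) : s.sort.Sublist t.sort :=
  List.sublist_of_subperm_of_pairwise
    (List.subperm_of_subset (s.sort_nodup _) fun x hx ↦ by simpa using h (by simpa using hx))
    (s.pairwise_sort _) (t.pairwise_sort _)

theorem sort_eq_cons_sort_append {a b : ι} (hab : a < b) {s : Finset ι} (ha : a ∈ s) (hb : b ∈ s)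
    (hs : ↑s ⊆ Set.Icc a b) : s.sort = a :: ((s \ {a, b}).sort ++ [b]) := by
  have hmem : ∀ x ∈ s, a ≤ x ∧ x ≤ b := fun x hx ↦ hs hx
  have hsorted : (a :: ((s \ {a, b}).sort ++ [b])).Pairwise (· ≤ ·) := by
    have hmid := (s \ {a, b}).pairwise_sort (· ≤ ·)
    grind [List.pairwise_cons, Finset.mem_sort]
  have hnodup : (a :: ((s \ {a, b}).sort ++ [b])).Nodup := by
    simp [List.nodup_append, hab.ne]
  have hs_eq : s = (a :: ((s \ {a, b}).sort ++ [b])).toFinset := by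
    ext x
    grind [List.mem_toFinset, Finset.mem_sort]
  conv_lhs => rw [hs_eq]
  exact (List.toFinset_sort (· ≤ ·) hnodup).2 hsorted

theorem consecutiveSum_sort_le_of_subset {M : Type*} [AddMonoid M] [Preorder M] [AddLeftMono M]
    [AddRightMono M] {w : ι → ι → M} {a b : ι} (hab : a < b) {s t : Finset ι} (ha : a ∈ s)
    (hb : b ∈ s) (hst : s ⊆ t) (ht : ↑t ⊆ Set.Icc a b)
    (hw : ∀ x ∈ t, ∀ y ∈ t, ∀ z ∈ t, x ≤ y → y ≤ z → w x z ≤ w x y + w y z) :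
    consecutiveSum w s.sort ≤ consecutiveSum w t.sort := by
  have htriple : t.sort.Triplewise fun x y z ↦ w x z ≤ w x y + w y z :=
    triplewise_of_pairwise (t.pairwise_sort _) (by simpa using hw)
  have hs : ↑s ⊆ Set.Icc a b := (Finset.coe_subset.2 hst).trans ht
  rw [sort_eq_cons_sort_append hab (hst ha) (hst hb) ht] at htriple ⊢
  rw [sort_eq_cons_sort_append hab ha hb hs]
  exact consecutiveSum_le_of_sublist
    (sort_sublist_sort (Finset.sdiff_subset_sdiff hst subset_rfl)) htriple

end SortedFinset

theorem monotoneOn_of_isStarProjection {ι A : Type*} [Preorder ι] [NonUnitalRing A] [PartialOrder A]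
    [StarRing A] [StarOrderedRing A] {P : ι → A} {S : Set ι} (hP : ∀ s ∈ S, IsStarProjection (P s))
    (hmul : ∀ s ∈ S, ∀ u ∈ S, s ≤ u → P s * P u = P s) : MonotoneOn P S :=
  fun s hs u hu hsu ↦ (hP s hs).le_of_mul_eq_left (hP u hu) (hmul s hs u hu hsu)

section CStarAlgebra

variable {A : Type*} [NonUnitalCStarAlgebra A] [PartialOrder A] [StarOrderedRing A]

theorem mul_sub_le_mul_sub_add_mul_sub {f₁ f₂ p₁ p₂ p₃ : A} (hf : f₁ ≤ f₂) (hp : p₂ ≤ p₃)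
    (hcomm : Commute (f₂ - f₁) (p₃ - p₂)) :
    f₁ * (p₃ - p₁) ≤ f₁ * (p₂ - p₁) + f₂ * (p₃ - p₂) := by
  rw [← sub_nonneg]
  convert hcomm.mul_nonneg (sub_nonneg.2 hf) (sub_nonneg.2 hp) using 1
  noncomm_ring

theorem sigma_monotone_in_refinement_general {ι : Type*} [LinearOrder ι] {a b : ι} (hab : a < b)
    {f P : ι → A} (hf : MonotoneOn f (Set.Icc a b)) (hP : MonotoneOn P (Set.Icc a b))
    (hcomm : ∀ s ∈ Set.Icc a b, ∀ u ∈ Set.Icc a b, s ≤ u → Commute (f s) (P u))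
    {θ' θ'' : Finset ι} (ha : a ∈ θ') (hb : b ∈ θ') (hsub : θ' ⊆ θ'')
    (hθ'' : ↑θ'' ⊆ Set.Icc a b) :
    consecutiveSum (fun s t ↦ f s * (P t - P s)) θ'.sort ≤
      consecutiveSum (fun s t ↦ f s * (P t - P s)) θ''.sort := by
  refine consecutiveSum_sort_le_of_subset hab ha hb hsub hθ'' fun x hx y hy z hz hxy hyz ↦ ?_
  replace hx := hθ'' hx
  replace hy := hθ'' hy
  replace hz := hθ'' hz
  refine mul_sub_le_mul_sub_add_mul_sub (hf hx hy hxy) (hP hy hz hyz) ?_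
  exact ((hcomm y hy z hz hyz).sub_right (hcomm y hy y hy le_rfl)).sub_left
    ((hcomm x hx z hz (hxy.trans hyz)).sub_right (hcomm x hx y hy hxy))

end CStarAlgebra

theorem sigmaSum_eq_consecutiveSum {H : Type*} [NormedAddCommGroup H] [InnerProductSpace ℂ H]
    (f P : ℝ → H →L[ℂ] H) (θ : Finset ℝ) :
    sigmaSum f P θ = consecutiveSum (fun s t ↦ f s * (P t - P s)) θ.sort :=
  rfl

/-- If f is hermitian, increasing and adapted-commuting, then for partitions
θ' ⊆ θ'' of [a,b], σ_{θ''} − σ_{θ'} is a positive operator; i.e. the net (σ_θ), indexed by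
partitions of [a,b] directed by refinement, is increasing. -/
theorem sigma_monotone_in_refinement
    {H : Type*} [NormedAddCommGroup H] [InnerProductSpace ℂ H] [CompleteSpace H]
    (a b : ℝ) (ha : 0 ≤ a) (hab : a < b)
    (P : ℝ → H →L[ℂ] H)
    (hP_proj : ∀ s, 0 ≤ s → IsSelfAdjoint (P s) ∧ P s ∘L P s = P s)
    (hP_mono : ∀ s u, 0 ≤ s → s ≤ u → P s ∘L P u = P s ∧ P u ∘L P s = P s)
    (f : ℝ → H →L[ℂ] H)
    (hf_herm : ∀ s, 0 ≤ s → IsSelfAdjoint (f s))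
    (hf_incr : ∀ u v, 0 ≤ u → u ≤ v → (f v - f u).IsPositive)
    (hf_adapted : ∀ s u, 0 ≤ s → s ≤ u → f s ∘L P u = P u ∘L f s)
    (θ' θ'' : Finset ℝ)
    (hθ' : IsPartitionOf a b θ') (hθ'' : IsPartitionOf a b θ'') (hsub : θ' ⊆ θ'') :
    (sigmaSum f P θ'' - sigmaSum f P θ').IsPositive := by
  have hP : MonotoneOn P (Set.Icc a b) := monotoneOn_of_isStarProjection
    (fun s hs ↦ ⟨(hP_proj s (ha.trans hs.1)).2, (hP_proj s (ha.trans hs.1)).1⟩)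
    (fun s hs u _ hsu ↦ (hP_mono s u (ha.trans hs.1) hsu).1)
  rw [← ContinuousLinearMap.le_def, sigmaSum_eq_consecutiveSum, sigmaSum_eq_consecutiveSum]
  exact sigma_monotone_in_refinement_general hab
    (fun s hs u _ hsu ↦ hf_incr s u (ha.trans hs.1) hsu) hP
    (fun s hs u _ hsu ↦ hf_adapted s u (ha.trans hs.1) hsu) hθ'.1 hθ'.2.1 hsub hθ''.2.2
end

section
/- Let (P_t)_{t≥0} be an increasing family of orthogonal projections on H, let f : [0,∞) → B(H) be adapted-commuting with respect to (P_t), let ξ ∈ H, and let ε, δ > 0 be such that ‖f(u) − f(v)‖ ≤ ε/(2‖ξ‖) whenever u, v ∈ [a,b] and |u − v| ≤ δ. If θ' is a partition of [a,b] with mesh less than δ and θ'' is any refinement of θ', then ‖σ_{θ''} ξ − σ_{θ'} ξ‖ ≤ ε/2. -/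
/-- `meshOf θ` is the mesh max_{1≤k≤m}(t_k − t_{k−1}) of the partition θ. -/
noncomputable def meshOf (θ : Finset ℝ) : ℝ :=
  (((θ.sort (· ≤ ·)).zip (θ.sort (· ≤ ·)).tail).map (fun p => p.2 - p.1)).foldr max 0

/-!
Let `c u` be the last point of `θ'` that is at most `u`. Passing from `θ'` to `θ''` does not change
the sum of the step function `f ∘ c`, and on `θ'` it agrees with `f`, so that
`σ_{θ''}(f) - σ_{θ'}(f) = σ_{θ''}(f - f ∘ c)`. The coefficient `f - f ∘ c` is bounded by `C` and, as
`c u ≤ u`, again adapted. For adapted coefficients the terms of the sum, applied to `ξ`, lie in the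
mutually orthogonal ranges of the increments `P t_k - P t_{k-1}`, and Pythagoras bounds the norm of
the sum by `C * ‖(P b - P a) ξ‖`.
-/

section ConsecutivePairs

variable {ι : Type*}

theorem le_or_le_of_mem_consecutivePairs [Preorder ι] {l : List ι}
    (hl : l.Pairwise (· < ·)) {p : ι × ι} (hp : p ∈ l.consecutivePairs) {x : ι} (hx : x ∈ l) :
    x ≤ p.1 ∨ p.2 ≤ x := by
  induction l with
  | nil => simp at hx
  | cons s l ih =>
    obtain ⟨hs, hl⟩ := List.pairwise_cons.1 hl
    cases l with
    | nil => simp [List.consecutivePairs] at hp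
    | cons t l =>
      have hle : ∀ y ∈ t :: l, t ≤ y := List.forall_mem_cons.2
        ⟨le_rfl, fun y hy => (List.rel_of_pairwise_cons hl hy).le⟩
      rcases List.mem_cons.1 hp with rfl | hp'
      · exact (List.mem_cons.1 hx).imp le_of_eq (hle x)
      · rcases List.mem_cons.1 hx with rfl | hx
        · exact .inl (hs _ (List.of_mem_zip hp').1).le
        · exact ih hl hp' hx

theorem exists_mem_consecutivePairs_mem_Ico [LinearOrder ι] {x b u : ι} {l : List ι}
    (hb : b ∈ x :: l) (hu : u ∈ Set.Ico x b) :
    ∃ p ∈ (x :: l).consecutivePairs, u ∈ Set.Ico p.1 p.2 := by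
  have hbl : b ∈ l := (List.mem_cons.1 hb).resolve_left (hu.1.trans_lt hu.2).ne'
  induction l generalizing x with
  | nil => simp at hbl
  | cons y l ih =>
    rcases lt_or_ge u y with huy | hyu
    · exact ⟨(x, y), by simp [List.consecutivePairs], hu.1, huy⟩
    · have hbl' : b ∈ l := (List.mem_cons.1 hbl).resolve_left (hyu.trans_lt hu.2).ne'
      obtain ⟨p, hp, hup⟩ := ih hbl ⟨hyu, hu.2⟩ hbl'
      exact ⟨p, List.mem_cons_of_mem _ hp, hup⟩

end ConsecutivePairs

section LeftSum

variable {ι R : Type*} [NonUnitalNonAssocRing R]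

/-- The left Riemann–Stieltjes sum `∑ f t_{k-1} * (P t_k - P t_{k-1})` over the consecutive entries
of a list, not required to be sorted. It extends `sigmaSum` to arbitrary index types and rings, and
is better suited to induction on the list of division points. -/
def leftSum (f P : ι → R) (l : List ι) : R :=
  (l.consecutivePairs.map fun p => f p.1 * (P p.2 - P p.1)).sum

@[simp]
theorem leftSum_singleton (f P : ι → R) (x : ι) : leftSum f P [x] = 0 := by
  simp [leftSum, List.consecutivePairs]

theorem leftSum_cons_cons (f P : ι → R) (x y : ι) (l : List ι) :
    leftSum f P (x :: y :: l) = f x * (P y - P x) + leftSum f P (y :: l) := by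
  simp [leftSum, List.consecutivePairs]

theorem leftSum_sub_left (f g P : ι → R) (l : List ι) :
    leftSum (f - g) P l = leftSum f P l - leftSum g P l := by
  simp only [leftSum]
  induction l.consecutivePairs with
  | nil => simp
  | cons p ps ih =>
    rw [List.map_cons, List.sum_cons, ih, Pi.sub_apply, sub_mul, List.map_cons, List.sum_cons,
      List.map_cons, List.sum_cons, add_sub_add_comm]

theorem leftSum_congr_left {f g : ι → R} (P : ι → R) {l : List ι}
    (h : ∀ p ∈ l.consecutivePairs, f p.1 = g p.1) : leftSum f P l = leftSum g P l := by
  simp only [leftSum]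
  congr 1
  exact List.map_congr_left fun p hp => by rw [h p hp]

-- The first increment of the coarse list starts at `c`, while the fine list has already advanced
-- from `c` to `x`; keeping the two apart is what makes the induction on the fine list go through.
theorem leftSum_cons_eq_add_of_sublist [PartialOrder ι] (g P : ι → R) {c x b : ι} {l l' : List ι}
    (hl : (x :: l).Pairwise (· < ·)) (hcx : c ≤ x) (hgx : g x = g c) (hsub : l'.Sublist l)
    (hb : b ∈ c :: l') (hlb : ∀ y ∈ x :: l, y ≤ b)
    (hg : ∀ p ∈ (c :: l').consecutivePairs, ∀ u ∈ Set.Ico p.1 p.2, g u = g p.1) :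
    leftSum g P (c :: l') = g c * (P x - P c) + leftSum g P (x :: l) := by
  induction l generalizing c x l' with
  | nil =>
    obtain rfl := List.sublist_nil.1 hsub
    obtain rfl := List.mem_singleton.1 hb
    obtain rfl := hcx.antisymm (hlb x (by simp))
    simp
  | cons y l ih =>
    obtain ⟨hx, hl⟩ := List.pairwise_cons.1 hl
    have hcy : c < y := hcx.trans_lt (hx y (by simp))
    have hyb : y ≤ b := hlb y (by simp)
    have hb' : b ∈ l' := (List.mem_cons.1 hb).resolve_left (hcy.trans_le hyb).ne'
    have hlb' : ∀ z ∈ y :: l, z ≤ b := fun z hz => hlb z (List.mem_cons_of_mem x hz)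
    cases hsub with
    | cons_cons _ hsub =>
      rw [leftSum_cons_cons, leftSum_cons_cons, hgx,
        ih hl le_rfl rfl hsub hb' hlb' fun p hp => hg p (List.mem_cons_of_mem _ hp)]
      noncomm_ring
    | cons _ hsub =>
      have hgy : g y = g c := by
        cases l' with
        | nil => simp at hb'
        | cons z l' =>
          have hyz : y < z := List.rel_of_pairwise_cons hl (hsub.subset (by simp))
          exact hg (c, z) (by simp [List.consecutivePairs]) y ⟨hcy.le, hyz⟩
      rw [ih hl hcy.le hgy hsub hb hlb' hg, leftSum_cons_cons, hgx]
      noncomm_ring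

theorem leftSum_eq_of_sublist [PartialOrder ι] (g P : ι → R) {a b : ι} {l l' : List ι}
    (hl : (a :: l).Pairwise (· < ·)) (hsub : l'.Sublist l) (hb : b ∈ a :: l')
    (hlb : ∀ y ∈ a :: l, y ≤ b)
    (hg : ∀ p ∈ (a :: l').consecutivePairs, ∀ u ∈ Set.Ico p.1 p.2, g u = g p.1) :
    leftSum g P (a :: l') = leftSum g P (a :: l) := by
  simpa using leftSum_cons_eq_add_of_sublist g P hl le_rfl rfl hsub hb hlb hg

end LeftSum

section IncreasingProjections

variable {ι 𝕜 E : Type*} [Preorder ι] [RCLike 𝕜] [NormedAddCommGroup E] [InnerProductSpace 𝕜 E]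

/-- `P` is an increasing family of orthogonal projections on the index set `S`. Orthogonality is
expressed by symmetry of `P i`, which makes sense in incomplete spaces; idempotence is
`mul_eq_left` at `i = j`. -/
structure IsIncreasingProjectionFamilyOn (P : ι → E →L[𝕜] E) (S : Set ι) : Prop where
  isSymmetric : ∀ i ∈ S, (P i : E →ₗ[𝕜] E).IsSymmetric
  mul_eq_left : ∀ i ∈ S, ∀ j ∈ S, i ≤ j → P i * P j = P i

/-- The adaptedness condition on `S`: `f i` commutes with the present and all future `P j`. -/
def IsAdaptedCommutingOn {R : Type*} [Mul R] (f P : ι → R) (S : Set ι) : Prop :=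
  ∀ i ∈ S, ∀ j ∈ S, i ≤ j → Commute (f i) (P j)

theorem norm_add_sq_of_isSymmetric {T : E →ₗ[𝕜] E} (hT : T.IsSymmetric) {v w : E}
    (hv : T v = v) (hw : T w = 0) : ‖v + w‖ ^ 2 = ‖v‖ ^ 2 + ‖w‖ ^ 2 := by
  have hvw : inner 𝕜 v w = 0 := by
    rw [← hv, hT v w, hw, inner_zero_right]
  simpa only [sq] using norm_add_sq_eq_norm_sq_add_norm_sq_of_inner_eq_zero v w hvw

namespace IsIncreasingProjectionFamilyOn

variable {P f : ι → E →L[𝕜] E} {S : Set ι} {i j k : ι}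

theorem mul_eq_right (hP : IsIncreasingProjectionFamilyOn P S) (hi : i ∈ S) (hj : j ∈ S)
    (hij : i ≤ j) : P j * P i = P i := by
  ext v
  refine ext_inner_right 𝕜 fun w => ?_
  calc inner 𝕜 (P j (P i v)) w = inner 𝕜 (P i v) (P j w) := hP.isSymmetric j hj _ _
    _ = inner 𝕜 v ((P i * P j) w) := hP.isSymmetric i hi _ _
    _ = inner 𝕜 v (P i w) := by rw [hP.mul_eq_left i hi j hj hij]
    _ = inner 𝕜 (P i v) w := (hP.isSymmetric i hi _ _).symm

theorem mul_sub_eq_self (hP : IsIncreasingProjectionFamilyOn P S) (hi : i ∈ S) (hj : j ∈ S)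
    (hij : i ≤ j) : P j * (P j - P i) = P j - P i := by
  rw [mul_sub, hP.mul_eq_left j hj j hj le_rfl, hP.mul_eq_right hi hj hij]

theorem mul_sub_eq_zero (hP : IsIncreasingProjectionFamilyOn P S) (hi : i ∈ S) (hj : j ∈ S)
    (hk : k ∈ S) (hij : i ≤ j) (hik : i ≤ k) : P i * (P k - P j) = 0 := by
  rw [mul_sub, hP.mul_eq_left i hi k hk hik, hP.mul_eq_left i hi j hj hij, sub_self]

theorem norm_sub_apply_le (hP : IsIncreasingProjectionFamilyOn P S) (hi : i ∈ S) (hj : j ∈ S)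
    (hij : i ≤ j) (ξ : E) : ‖(P j - P i) ξ‖ ≤ ‖ξ‖ := by
  have hsymm : ((P j - P i : E →L[𝕜] E) : E →ₗ[𝕜] E).IsSymmetric :=
    (hP.isSymmetric j hj).sub (hP.isSymmetric i hi)
  have hidem : (P j - P i) * (P j - P i) = P j - P i := by
    rw [sub_mul, hP.mul_sub_eq_self hi hj hij, hP.mul_sub_eq_zero hi hi hj le_rfl hij, sub_zero]
  have hproj : (P j - P i) ((P j - P i) ξ) = (P j - P i) ξ := congr($hidem ξ)
  have hcompl : (P j - P i) (ξ - (P j - P i) ξ) = 0 := by rw [map_sub, hproj, sub_self]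
  have hpyth := norm_add_sq_of_isSymmetric hsymm hproj hcompl
  rw [add_sub_cancel] at hpyth
  exact le_of_sq_le_sq (hpyth ▸ le_add_of_nonneg_right (sq_nonneg _)) (norm_nonneg ξ)

theorem norm_sub_apply_sq (hP : IsIncreasingProjectionFamilyOn P S) (hi : i ∈ S) (hj : j ∈ S)
    (hk : k ∈ S) (hij : i ≤ j) (hjk : j ≤ k) (ξ : E) :
    ‖(P k - P i) ξ‖ ^ 2 = ‖(P j - P i) ξ‖ ^ 2 + ‖(P k - P j) ξ‖ ^ 2 := by
  have hproj : P j ((P j - P i) ξ) = (P j - P i) ξ := congr($(hP.mul_sub_eq_self hi hj hij) ξ)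
  have hzero : P j ((P k - P j) ξ) = 0 := congr($(hP.mul_sub_eq_zero hj hj hk le_rfl hjk) ξ)
  have hsum : (P k - P i) ξ = (P j - P i) ξ + (P k - P j) ξ := by
    rw [← add_apply, add_comm, sub_add_sub_cancel]
  rw [hsum, norm_add_sq_of_isSymmetric (hP.isSymmetric j hj) hproj hzero]

theorem mul_leftSum_eq_zero (hP : IsIncreasingProjectionFamilyOn P S)
    (hf : IsAdaptedCommutingOn f P S) (hi : i ∈ S) {l : List ι}
    (hl : (i :: l).Pairwise (· ≤ ·)) (hlS : ∀ s ∈ l, s ∈ S) : P i * leftSum f P l = 0 := by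
  induction l with
  | nil => simp [leftSum, List.consecutivePairs]
  | cons s l ih =>
    cases l with
    | nil => simp
    | cons t l =>
      have hs : s ∈ S := hlS s (by simp)
      have ht : t ∈ S := hlS t (by simp)
      have his : i ≤ s := List.rel_of_pairwise_cons hl (by simp)
      have hst : s ≤ t := List.rel_of_pairwise_cons hl.of_cons (by simp)
      have hfirst : P i * (f s * (P t - P s)) = 0 :=
        calc P i * (f s * (P t - P s)) = P i * P s * f s * (P t - P s) := by
              rw [hP.mul_eq_left i hi s hs his, mul_assoc]
          _ = P i * f s * (P s * (P t - P s)) := by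
              rw [mul_assoc (P i), ← (hf s hs s hs le_rfl).eq]; simp only [mul_assoc]
          _ = 0 := by rw [hP.mul_sub_eq_zero hs hs ht le_rfl hst, mul_zero]
      have hl' : (i :: t :: l).Pairwise (· ≤ ·) := hl.sublist (by simp)
      rw [leftSum_cons_cons, mul_add, hfirst, zero_add,
        ih hl' fun z hz => hlS z (List.mem_cons_of_mem s hz)]

theorem norm_leftSum_apply_sq_le (hP : IsIncreasingProjectionFamilyOn P S)
    (hf : IsAdaptedCommutingOn f P S) {C : ℝ} (hC : ∀ s ∈ S, ‖f s‖ ≤ C) {x b : ι} {l : List ι}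
    (hl : (x :: l).Pairwise (· ≤ ·)) (hlS : ∀ s ∈ x :: l, s ∈ S) (hb : b ∈ S)
    (hlb : ∀ s ∈ x :: l, s ≤ b) (ξ : E) :
    ‖leftSum f P (x :: l) ξ‖ ^ 2 ≤ C ^ 2 * ‖(P b - P x) ξ‖ ^ 2 := by
  induction l generalizing x with
  | nil =>
    rw [leftSum_singleton, zero_apply, norm_zero, zero_pow two_ne_zero]
    positivity
  | cons y l ih =>
    obtain ⟨hx, hlS'⟩ := List.forall_mem_cons.1 hlS
    have hy : y ∈ S := hlS' y (by simp)
    have hxy : x ≤ y := List.rel_of_pairwise_cons hl (by simp)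
    have hyb : y ≤ b := hlb y (by simp)
    have hhead : P y * (f x * (P y - P x)) = f x * (P y - P x) := by
      rw [← mul_assoc, ← (hf x hx y hy hxy).eq, mul_assoc, hP.mul_sub_eq_self hx hy hxy]
    have htail : P y * leftSum f P (y :: l) = 0 :=
      hP.mul_leftSum_eq_zero hf hy (List.pairwise_cons.2
        ⟨List.forall_mem_cons.2 ⟨le_rfl, fun _ => List.rel_of_pairwise_cons hl.of_cons⟩,
          hl.of_cons⟩) hlS'
    calc ‖leftSum f P (x :: y :: l) ξ‖ ^ 2
        = ‖f x ((P y - P x) ξ)‖ ^ 2 + ‖leftSum f P (y :: l) ξ‖ ^ 2 := by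
          rw [leftSum_cons_cons]
          exact norm_add_sq_of_isSymmetric (hP.isSymmetric y hy) congr($hhead ξ) congr($htail ξ)
      _ ≤ (C * ‖(P y - P x) ξ‖) ^ 2 + C ^ 2 * ‖(P b - P y) ξ‖ ^ 2 := by
          gcongr
          · exact (f x).le_of_opNorm_le (hC x hx) _
          · exact ih hl.of_cons hlS' fun s hs => hlb s (List.mem_cons_of_mem x hs)
      _ = C ^ 2 * ‖(P b - P x) ξ‖ ^ 2 := by
          rw [hP.norm_sub_apply_sq hx hy hb hxy hyb]
          ring

theorem norm_leftSum_apply_le (hP : IsIncreasingProjectionFamilyOn P S)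
    (hf : IsAdaptedCommutingOn f P S) {C : ℝ} (hC : ∀ s ∈ S, ‖f s‖ ≤ C) {x b : ι} {l : List ι}
    (hl : (x :: l).Pairwise (· ≤ ·)) (hlS : ∀ s ∈ x :: l, s ∈ S) (hb : b ∈ S)
    (hlb : ∀ s ∈ x :: l, s ≤ b) (ξ : E) :
    ‖leftSum f P (x :: l) ξ‖ ≤ C * ‖(P b - P x) ξ‖ := by
  have hC₀ : 0 ≤ C := (norm_nonneg _).trans (hC b hb)
  refine le_of_sq_le_sq ?_ (by positivity)
  rw [mul_pow]
  exact hP.norm_leftSum_apply_sq_le hf hC hl hlS hb hlb ξ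

end IsIncreasingProjectionFamilyOn

end IncreasingProjections

section LastPointLE

variable {ι : Type*} [ConditionallyCompleteLinearOrder ι] {θ : Finset ι} {u : ι}

/-- The last point of `θ` that is at most `u`, that is, the left end point of the subinterval of
the partition `θ` containing `u`. It is a junk value when `θ` has no point in `(-∞, u]`. -/
noncomputable def lastPointLE (θ : Finset ι) (u : ι) : ι :=
  sSup {s | s ∈ θ ∧ s ≤ u}

theorem lastPointLE_mem {s : ι} (hs : s ∈ θ) (hsu : s ≤ u) :
    lastPointLE θ u ∈ θ ∧ lastPointLE θ u ≤ u :=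
  Set.Nonempty.csSup_mem (s := {s | s ∈ θ ∧ s ≤ u}) ⟨s, hs, hsu⟩
    (θ.finite_toSet.subset fun _ h => h.1)

theorem le_lastPointLE {s : ι} (hs : s ∈ θ) (hsu : s ≤ u) : s ≤ lastPointLE θ u :=
  le_csSup ⟨u, fun _ h => h.2⟩ ⟨hs, hsu⟩

theorem lastPointLE_of_mem (hu : u ∈ θ) : lastPointLE θ u = u :=
  (lastPointLE_mem hu le_rfl).2.antisymm (le_lastPointLE hu le_rfl)

theorem lastPointLE_eq_of_mem_Ico {p : ι × ι}
    (hp : p ∈ (θ.sort (· ≤ ·)).consecutivePairs) (hu : u ∈ Set.Ico p.1 p.2) :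
    lastPointLE θ u = p.1 := by
  have hp₁ : p.1 ∈ θ := (Finset.mem_sort _).1 (List.of_mem_zip hp).1
  obtain ⟨hmem, hle⟩ := lastPointLE_mem hp₁ hu.1
  have hgap := le_or_le_of_mem_consecutivePairs θ.sortedLT_sort.pairwise hp
    ((Finset.mem_sort _).2 hmem)
  exact (hgap.resolve_right (hle.trans_lt hu.2).not_ge).antisymm (le_lastPointLE hp₁ hu.1)

end LastPointLE

theorem sort_sublist_sort_s9 {ι : Type*} [LinearOrder ι] {s t : Finset ι} (hst : s ⊆ t) :
    (s.sort (· ≤ ·)).Sublist (t.sort (· ≤ ·)) :=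
  List.sublist_of_subperm_of_sortedLE
    ((s.sort_nodup _).subperm fun _ hx => (Finset.mem_sort _).2 (hst ((Finset.mem_sort _).1 hx)))
    s.sortedLT_sort.sortedLE t.sortedLT_sort.sortedLE

theorem sub_le_meshOf {θ : Finset ℝ} {p : ℝ × ℝ}
    (hp : p ∈ (θ.sort (· ≤ ·)).consecutivePairs) : p.2 - p.1 ≤ meshOf θ :=
  List.le_max_of_le' 0 (List.mem_map_of_mem hp) le_rfl

theorem meshOf_nonneg (θ : Finset ℝ) : 0 ≤ meshOf θ :=
  List.foldrRecOn _ _ le_rfl fun _ h _ _ => le_max_of_le_right h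

section SigmaSum

variable {H : Type*} [NormedAddCommGroup H] [InnerProductSpace ℂ H]

theorem sigmaSum_eq_leftSum_sort (f P : ℝ → H →L[ℂ] H) (θ : Finset ℝ) :
    sigmaSum f P θ = leftSum f P (θ.sort (· ≤ ·)) :=
  rfl

theorem sigmaSum_sub_left (f g P : ℝ → H →L[ℂ] H) (θ : Finset ℝ) :
    sigmaSum (f - g) P θ = sigmaSum f P θ - sigmaSum g P θ := by
  simp only [sigmaSum_eq_leftSum_sort, leftSum_sub_left]

end SigmaSum

namespace IsPartitionOf

variable {a b u : ℝ} {θ θ' θ'' : Finset ℝ}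

theorem sort_eq_cons (hθ : IsPartitionOf a b θ) :
    θ.sort (· ≤ ·) = a :: (θ.erase a).sort (· ≤ ·) := by
  rw [← Finset.sort_insert _ (fun s hs => (hθ.2.2 s (Finset.mem_of_mem_erase hs)).1)
    (Finset.notMem_erase a θ), Finset.insert_erase hθ.1]

theorem pairwise_cons_sort_erase (hθ : IsPartitionOf a b θ) :
    (a :: (θ.erase a).sort (· ≤ ·)).Pairwise (· < ·) :=
  hθ.sort_eq_cons ▸ θ.sortedLT_sort.pairwise

theorem mem_cons_sort_erase_iff (hθ : IsPartitionOf a b θ) :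
    u ∈ a :: (θ.erase a).sort (· ≤ ·) ↔ u ∈ θ := by
  rw [← hθ.sort_eq_cons, Finset.mem_sort]

theorem lastPointLE_mem_Icc (hθ : IsPartitionOf a b θ) (hu : a ≤ u) :
    lastPointLE θ u ∈ Set.Icc a u :=
  ⟨le_lastPointLE hθ.1 hu, (lastPointLE_mem hθ.1 hu).2⟩

theorem sub_lastPointLE_le_meshOf (hθ : IsPartitionOf a b θ) (hu : u ∈ Set.Icc a b) :
    u - lastPointLE θ u ≤ meshOf θ := by
  rcases hu.2.eq_or_lt with rfl | hub
  · rw [lastPointLE_of_mem hθ.2.1, sub_self]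
    exact meshOf_nonneg θ
  · obtain ⟨p, hp, hup⟩ :=
      exists_mem_consecutivePairs_mem_Ico (hθ.mem_cons_sort_erase_iff.2 hθ.2.1) ⟨hu.1, hub⟩
    rw [← hθ.sort_eq_cons] at hp
    rw [lastPointLE_eq_of_mem_Ico hp hup]
    exact (sub_le_sub_right hup.2.le _).trans (sub_le_meshOf hp)

variable {H : Type*} [NormedAddCommGroup H] [InnerProductSpace ℂ H] {f P : ℝ → H →L[ℂ] H}

theorem sigmaSum_eq_leftSum (hθ : IsPartitionOf a b θ) :
    sigmaSum f P θ = leftSum f P (a :: (θ.erase a).sort (· ≤ ·)) := by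
  rw [sigmaSum_eq_leftSum_sort, hθ.sort_eq_cons]

theorem sigmaSum_comp_lastPointLE (hθ' : IsPartitionOf a b θ') (hθ'' : IsPartitionOf a b θ'')
    (hsub : θ' ⊆ θ'') : sigmaSum (f ∘ lastPointLE θ') P θ'' = sigmaSum f P θ' := by
  have hstep : ∀ p ∈ (θ'.sort (· ≤ ·)).consecutivePairs, ∀ u ∈ Set.Ico p.1 p.2,
      lastPointLE θ' u = p.1 := fun p hp u hu => lastPointLE_eq_of_mem_Ico hp hu
  have hself : ∀ p ∈ (θ'.sort (· ≤ ·)).consecutivePairs, lastPointLE θ' p.1 = p.1 :=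
    fun p hp => lastPointLE_of_mem ((Finset.mem_sort _).1 (List.of_mem_zip hp).1)
  rw [hθ'.sort_eq_cons] at hstep hself
  calc sigmaSum (f ∘ lastPointLE θ') P θ''
      = leftSum (f ∘ lastPointLE θ') P (a :: (θ''.erase a).sort (· ≤ ·)) :=
        hθ''.sigmaSum_eq_leftSum
    _ = leftSum (f ∘ lastPointLE θ') P (a :: (θ'.erase a).sort (· ≤ ·)) :=
        (leftSum_eq_of_sublist _ P hθ''.pairwise_cons_sort_erase
          (sort_sublist_sort_s9 (Finset.erase_subset_erase a hsub))
          (hθ'.mem_cons_sort_erase_iff.2 hθ'.2.1)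
          (fun y hy => (hθ''.2.2 y (hθ''.mem_cons_sort_erase_iff.1 hy)).2)
          fun p hp u hu => congrArg f ((hstep p hp u hu).trans (hself p hp).symm)).symm
    _ = leftSum f P (a :: (θ'.erase a).sort (· ≤ ·)) :=
        leftSum_congr_left P fun p hp => congrArg f (hself p hp)
    _ = sigmaSum f P θ' := hθ'.sigmaSum_eq_leftSum.symm

theorem norm_sigmaSum_apply_le (hθ : IsPartitionOf a b θ)
    (hP : IsIncreasingProjectionFamilyOn P (Set.Icc a b))
    (hf : IsAdaptedCommutingOn f P (Set.Icc a b)) {C : ℝ} (hC : ∀ s ∈ Set.Icc a b, ‖f s‖ ≤ C)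
    (ξ : H) : ‖sigmaSum f P θ ξ‖ ≤ C * ‖(P b - P a) ξ‖ := by
  have hmem : ∀ s ∈ a :: (θ.erase a).sort (· ≤ ·), s ∈ Set.Icc a b :=
    fun s hs => hθ.2.2 s (hθ.mem_cons_sort_erase_iff.1 hs)
  rw [hθ.sigmaSum_eq_leftSum]
  exact hP.norm_leftSum_apply_le hf hC (hθ.pairwise_cons_sort_erase.imp le_of_lt) hmem
    (hθ.2.2 b hθ.2.1) (fun s hs => (hmem s hs).2) ξ

end IsPartitionOf

theorem sigma_refinement_estimate_general
    {H : Type*} [NormedAddCommGroup H] [InnerProductSpace ℂ H] {a b : ℝ}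
    {P f : ℝ → H →L[ℂ] H} (hP : IsIncreasingProjectionFamilyOn P (Set.Icc a b))
    (hf : IsAdaptedCommutingOn f P (Set.Icc a b)) {C δ : ℝ}
    (hosc : ∀ u v, u ∈ Set.Icc a b → v ∈ Set.Icc a b → |u - v| ≤ δ → ‖f u - f v‖ ≤ C)
    {θ' θ'' : Finset ℝ} (hθ' : IsPartitionOf a b θ') (hθ'' : IsPartitionOf a b θ'')
    (hmesh : meshOf θ' ≤ δ) (hsub : θ' ⊆ θ'') (ξ : H) :
    ‖sigmaSum f P θ'' ξ - sigmaSum f P θ' ξ‖ ≤ C * ‖(P b - P a) ξ‖ := by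
  have hlast : ∀ u ∈ Set.Icc a b, lastPointLE θ' u ∈ Set.Icc a b ∧ lastPointLE θ' u ≤ u := by
    intro u hu
    obtain ⟨hal, hlu⟩ := hθ'.lastPointLE_mem_Icc hu.1
    exact ⟨⟨hal, hlu.trans hu.2⟩, hlu⟩
  have hadapted : IsAdaptedCommutingOn (f - f ∘ lastPointLE θ') P (Set.Icc a b) :=
    fun s hs t ht hst => (hf s hs t ht hst).sub_left
      (hf _ (hlast s hs).1 t ht ((hlast s hs).2.trans hst))
  have hbound : ∀ s ∈ Set.Icc a b, ‖(f - f ∘ lastPointLE θ') s‖ ≤ C := fun s hs =>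
    hosc s _ hs (hlast s hs).1 <| by
      rw [abs_of_nonneg (sub_nonneg.2 (hlast s hs).2)]
      exact (hθ'.sub_lastPointLE_le_meshOf hs).trans hmesh
  have hdiff : sigmaSum (f - f ∘ lastPointLE θ') P θ'' = sigmaSum f P θ'' - sigmaSum f P θ' := by
    rw [sigmaSum_sub_left, hθ'.sigmaSum_comp_lastPointLE hθ'' hsub]
  rw [← sub_apply, ← hdiff]
  exact hθ''.norm_sigmaSum_apply_le hP hadapted hbound ξ

/-- If ‖f(u) − f(v)‖ ≤ ε/(2‖ξ‖) whenever u, v ∈ [a,b] with |u − v| ≤ δ, θ'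
is a partition of [a,b] of mesh < δ and θ'' refines θ', then
‖σ_{θ''}ξ − σ_{θ'}ξ‖ ≤ ε/2. -/
theorem sigma_refinement_estimate
    {H : Type*} [NormedAddCommGroup H] [InnerProductSpace ℂ H] [CompleteSpace H]
    (a b : ℝ) (ha : 0 ≤ a) (hab : a < b)
    (P : ℝ → H →L[ℂ] H)
    (hP_proj : ∀ s, 0 ≤ s → IsSelfAdjoint (P s) ∧ P s ∘L P s = P s)
    (hP_mono : ∀ s u, 0 ≤ s → s ≤ u → P s ∘L P u = P s ∧ P u ∘L P s = P s)
    (f : ℝ → H →L[ℂ] H)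
    (hf_adapted : ∀ s u, 0 ≤ s → s ≤ u → f s ∘L P u = P u ∘L f s)
    (ξ : H) (ε δ : ℝ) (hε : 0 < ε) (hδ : 0 < δ)
    (hf_osc : ∀ u v, u ∈ Set.Icc a b → v ∈ Set.Icc a b → |u - v| ≤ δ →
      ‖f u - f v‖ ≤ ε / (2 * ‖ξ‖))
    (θ' θ'' : Finset ℝ)
    (hθ' : IsPartitionOf a b θ') (hθ'' : IsPartitionOf a b θ'')
    (hmesh : meshOf θ' < δ) (hsub : θ' ⊆ θ'') :
    ‖sigmaSum f P θ'' ξ - sigmaSum f P θ' ξ‖ ≤ ε / 2 := by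
  have hP : IsIncreasingProjectionFamilyOn P (Set.Icc a b) :=
    ⟨fun s hs => (hP_proj s (ha.trans hs.1)).1.isSymmetric,
      fun s hs u _ hsu => (hP_mono s u (ha.trans hs.1) hsu).1⟩
  have hf : IsAdaptedCommutingOn f P (Set.Icc a b) :=
    fun s hs u _ hsu => hf_adapted s u (ha.trans hs.1) hsu
  calc ‖sigmaSum f P θ'' ξ - sigmaSum f P θ' ξ‖
      ≤ ε / (2 * ‖ξ‖) * ‖(P b - P a) ξ‖ :=
        sigma_refinement_estimate_general hP hf hf_osc hθ' hθ'' hmesh.le hsub ξ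
    _ ≤ ε / (2 * ‖ξ‖) * ‖ξ‖ := by
        gcongr
        exact hP.norm_sub_apply_le (hθ'.2.2 a hθ'.1) (hθ'.2.2 b hθ'.2.1) hab.le ξ
    _ ≤ ε / 2 := by
        rw [← div_div, mul_comm_div]
        exact mul_le_of_le_one_right (by positivity) (div_self_le_one _)
end
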